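/- Proposition 5 (main case): Let n ≥ 5 and let ψ be a pure n-qubit state satisfying the preferred-basis condition. If M(ρ_ψ) > C(n-1, 2), then ψ is genuinely n-partite entangled: there is no bipartition of the n qubits into two nonempty sets over which ψ is a product of two pure states. -/

import Mathlib

noncomputable def pauli : ℕ → Matrix (Fin 2) (Fin 2) ℂ
  | 1 => !![0, 1; 1, 0]
  | 2 => !![0, -Complex.I; Complex.I, 0]
  | 3 => !![1, 0; 0, -1]
  | _ => 1

/-- The `ι`-fold Kronecker product of single-qubit operators `pauli (f k)`. -/
noncomputable def kronOp {ι : Type*} [Fintype ι] [DecidableEq ι] (f : ι → ℕ) :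
    Matrix (ι → Fin 2) (ι → Fin 2) ℂ :=
  Matrix.of fun x y => ∏ k, pauli (f k) (x k) (y k)

/-- Two-body correlation `T^{kl}_{ij}(ρ)`. -/
noncomputable def corr {ι : Type*} [Fintype ι] [DecidableEq ι]
    (ρ : Matrix (ι → Fin 2) (ι → Fin 2) ℂ) (k l : ι) (i j : ℕ) : ℝ :=
  ((ρ * kronOp (fun q => if q = k then i else if q = l then j else 0)).trace).re

/-- Single-qubit Bloch vector component `b^{(q)}_i(ρ)`. -/
noncomputable def bloch {ι : Type*} [Fintype ι] [DecidableEq ι]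
    (ρ : Matrix (ι → Fin 2) (ι → Fin 2) ℂ) (q : ι) (i : ℕ) : ℝ :=
  ((ρ * kronOp (fun p => if p = q then i else 0)).trace).re

/-- `M_{kl}(ρ)`. -/
noncomputable def Mkl {ι : Type*} [Fintype ι] [DecidableEq ι]
    (ρ : Matrix (ι → Fin 2) (ι → Fin 2) ℂ) (k l : ι) : ℝ :=
  ∑ i ∈ Finset.Icc 1 2, ∑ j ∈ Finset.Icc 1 2, (corr ρ k l i j) ^ 2

/-- `M(ρ) = Σ_{k<l} M_{kl}(ρ)`. -/
noncomputable def Mtot {ι : Type*} [Fintype ι] [LinearOrder ι]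
    (ρ : Matrix (ι → Fin 2) (ι → Fin 2) ℂ) : ℝ :=
  ∑ p ∈ Finset.univ.filter (fun p : ι × ι => p.1 < p.2), Mkl ρ p.1 p.2

/-- Density matrix of a pure state `ψ`: `ρ_ψ = ψ ψ†`. -/
noncomputable def pureDensity {ι : Type*} [Fintype ι] [DecidableEq ι]
    (ψ : (ι → Fin 2) → ℂ) : Matrix (ι → Fin 2) (ι → Fin 2) ℂ :=
  Matrix.of fun x y => ψ x * (starRingEnd ℂ) (ψ y)

/-- `ψ` is a unit vector. -/
def UnitVec {ι : Type*} [Fintype ι] [DecidableEq ι] (ψ : (ι → Fin 2) → ℂ) : Prop :=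
  ∑ x, Complex.normSq (ψ x) = 1

/-- Preferred-basis condition: all transverse Bloch components vanish. -/
def PreferredBasis {ι : Type*} [Fintype ι] [DecidableEq ι]
    (ρ : Matrix (ι → Fin 2) (ι → Fin 2) ℂ) : Prop :=
  ∀ q : ι, bloch ρ q 1 = 0 ∧ bloch ρ q 2 = 0

/-- `P` is a partition of `Fin n` into `k` nonempty blocks. -/
def IsPartition {n k : ℕ} (P : Fin k → Finset (Fin n)) : Prop :=
  (∀ m, (P m).Nonempty) ∧ (∀ m m', m ≠ m' → Disjoint (P m) (P m')) ∧
    ∀ q : Fin n, ∃ m, q ∈ P m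

/-- Restriction of an `n`-bit string to a block of qubits. -/
def restrictB {n : ℕ} (S : Finset (Fin n)) (f : Fin n → Fin 2) : (↥S → Fin 2) :=
  fun q => f q.val

/-- `ψ` is the tensor product, under the canonical qubit-reordering isomorphism,
of pure states on the blocks of `P`. -/
def IsProductOver {n k : ℕ} (ψ : (Fin n → Fin 2) → ℂ) (P : Fin k → Finset (Fin n)) : Prop :=
  ∃ φ : (m : Fin k) → ((↥(P m) → Fin 2) → ℂ),
    (∀ m, UnitVec (φ m)) ∧ ∀ f : Fin n → Fin 2, ψ f = ∏ m, φ m (restrictB (P m) f)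

theorem pauli_herm (a : ℕ) (x y : Fin 2) : (starRingEnd ℂ) (pauli a x y) = pauli a y x := by
  match a with
  | 0 => fin_cases x <;> fin_cases y <;> simp [pauli]
  | 1 => fin_cases x <;> fin_cases y <;> simp [pauli]
  | 2 => fin_cases x <;> fin_cases y <;> simp [pauli]
  | 3 => fin_cases x <;> fin_cases y <;> simp [pauli]
  | (k+4) => fin_cases x <;> fin_cases y <;> simp [pauli]

theorem pauli_zero : pauli 0 = 1 := rfl

theorem pauli_sq (a : ℕ) : pauli a * pauli a = 1 := by
  match a with
  | 0 => simp [pauli]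
  | 1 => ext x y; fin_cases x <;> fin_cases y <;> simp [pauli]
  | 2 => ext x y; fin_cases x <;> fin_cases y <;> simp [pauli]
  | 3 => ext x y; fin_cases x <;> fin_cases y <;> simp [pauli]
  | (k+4) => simp [pauli]

theorem pauli_anti12 : pauli 1 * pauli 2 = -(pauli 2 * pauli 1) := by
  ext x y; fin_cases x <;> fin_cases y <;> simp [pauli]

theorem pauli_anti21 : pauli 2 * pauli 1 = -(pauli 1 * pauli 2) := by
  rw [pauli_anti12, neg_neg]

section general
variable {ι : Type*} [Fintype ι] [DecidableEq ι]

theorem kronOp_mul_apply (f g : ι → ℕ) (x y : ι → Fin 2) :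
    (kronOp f * kronOp g) x y = ∏ k, (pauli (f k) * pauli (g k)) (x k) (y k) := by
  simp only [Matrix.mul_apply, kronOp, Matrix.of_apply]
  rw [Finset.prod_univ_sum]
  simp [Finset.prod_mul_distrib]

theorem kronOp_herm (f : ι → ℕ) : (kronOp f).conjTranspose = kronOp f := by
  ext x y
  simp [kronOp, Matrix.conjTranspose_apply, pauli_herm]

theorem prod_one_apply (x y : ι → Fin 2) :
    ∏ k, (1 : Matrix (Fin 2) (Fin 2) ℂ) (x k) (y k) = (1 : Matrix (ι → Fin 2) (ι → Fin 2) ℂ) x y := by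
  by_cases h : x = y
  · subst h; simp
  · rw [Matrix.one_apply_ne h]
    obtain ⟨k, hk⟩ := Function.ne_iff.mp h
    exact Finset.prod_eq_zero (Finset.mem_univ k) (Matrix.one_apply_ne hk)

theorem kronOp_sq (f : ι → ℕ) : kronOp f * kronOp f = 1 := by
  ext x y
  rw [kronOp_mul_apply]
  simp only [pauli_sq, prod_one_apply]

theorem kronOp_zero : kronOp (fun _ : ι => 0) = 1 := by
  ext x y
  simp only [kronOp, Matrix.of_apply, pauli_zero, prod_one_apply]

theorem kronOp_anti (f g : ι → ℕ) (c : ι)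
    (hc : pauli (f c) * pauli (g c) = -(pauli (g c) * pauli (f c)))
    (ho : ∀ q, q ≠ c → f q = g q ∨ f q = 0 ∨ g q = 0) :
    kronOp f * kronOp g = -(kronOp g * kronOp f) := by
  ext x y
  rw [Matrix.neg_apply, kronOp_mul_apply, kronOp_mul_apply,
    ← Finset.mul_prod_erase _ _ (Finset.mem_univ c), ← Finset.mul_prod_erase _ _ (Finset.mem_univ c),
    hc, Matrix.neg_apply, neg_mul]
  congr 2
  refine Finset.prod_congr rfl fun q hq => ?_
  rcases ho q (Finset.ne_of_mem_erase hq) with h | h | h <;> simp [h, pauli_zero]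

/-- Expectation value. -/
noncomputable def ev (ψ : (ι → Fin 2) → ℂ) (B : Matrix (ι → Fin 2) (ι → Fin 2) ℂ) : ℂ :=
  (pureDensity ψ * B).trace

theorem ev_eq (ψ : (ι → Fin 2) → ℂ) (B : Matrix (ι → Fin 2) (ι → Fin 2) ℂ) :
    ev ψ B = ∑ x, ∑ y, ψ x * (starRingEnd ℂ) (ψ y) * B y x := by
  simp [ev, Matrix.trace, Matrix.mul_apply, pureDensity]

theorem ev_conj (ψ : (ι → Fin 2) → ℂ) (B : Matrix (ι → Fin 2) (ι → Fin 2) ℂ) :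
    ev ψ B.conjTranspose = (starRingEnd ℂ) (ev ψ B) := by
  rw [ev_eq, ev_eq, Finset.sum_comm]
  simp only [map_sum, map_mul, Matrix.conjTranspose_apply, Complex.conj_conj]
  refine Finset.sum_congr rfl fun x _ => Finset.sum_congr rfl fun y _ => ?_
  simp only [Complex.star_def]; ring

theorem ev_one (ψ : (ι → Fin 2) → ℂ) (h : UnitVec ψ) : ev ψ 1 = 1 := by
  rw [ev_eq]
  simp only [Matrix.one_apply, mul_ite, mul_one, mul_zero, Finset.sum_ite_eq', Finset.mem_univ,
    if_true, Complex.mul_conj]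
  rw [← Complex.ofReal_sum, h, Complex.ofReal_one]

theorem ev_sq_nonneg (ψ : (ι → Fin 2) → ℂ) (B : Matrix (ι → Fin 2) (ι → Fin 2) ℂ) :
    0 ≤ (ev ψ (B.conjTranspose * B)).re := by
  have : ev ψ (B.conjTranspose * B) = ∑ z, ((Complex.normSq (∑ x, B z x * ψ x) : ℝ) : ℂ) := by
    rw [ev_eq]
    simp only [← Complex.mul_conj, Matrix.mul_apply, Matrix.conjTranspose_apply, map_sum, map_mul,
      Finset.sum_mul_sum]
    simp only [Finset.mul_sum]
    rw [Finset.sum_comm_cycle]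
    refine Finset.sum_congr rfl fun z _ => Finset.sum_congr rfl fun x _ =>
      Finset.sum_congr rfl fun y _ => ?_
    simp only [Complex.star_def]; ring
  rw [this, ← Complex.ofReal_sum, Complex.ofReal_re]
  exact Finset.sum_nonneg fun _ _ => Complex.normSq_nonneg _

theorem ev_real (ψ : (ι → Fin 2) → ℂ) (f : ι → ℕ) : (ev ψ (kronOp f)).im = 0 := by
  have := ev_conj ψ (kronOp f)
  rw [kronOp_herm] at this
  exact Complex.conj_eq_iff_im.mp this.symm

theorem bessel {m : ℕ} (ψ : (ι → Fin 2) → ℂ) (h : UnitVec ψ) (F : Fin m → ι → ℕ)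
    (hF : ∀ i j, i ≠ j → kronOp (F i) * kronOp (F j) = -(kronOp (F j) * kronOp (F i))) :
    ∑ i, (ev ψ (kronOp (F i))).re ^ 2 ≤ 1 := by
  set t : Fin m → ℝ := fun i => (ev ψ (kronOp (F i))).re with ht
  have hK : ∀ i j, (ev ψ (kronOp (F i) * kronOp (F j))).re = if i = j then 1 else 0 := by
    intro i j
    split_ifs with hij
    · subst hij; rw [kronOp_sq, ev_one ψ h, Complex.one_re]
    · have h1 := ev_conj ψ (kronOp (F i) * kronOp (F j))
      rw [Matrix.conjTranspose_mul, kronOp_herm, kronOp_herm] at h1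
      have h2 : ev ψ (kronOp (F i) * kronOp (F j)) = -ev ψ (kronOp (F j) * kronOp (F i)) := by
        rw [hF i j hij]; simp [ev]
      have h3 := congrArg Complex.re h1
      have h4 := congrArg Complex.re h2
      simp only [Complex.conj_re, Complex.neg_re] at h3 h4
      linarith
  set A : Matrix (ι → Fin 2) (ι → Fin 2) ℂ := ∑ i, (t i : ℂ) • kronOp (F i) with hA
  have hAh : A.conjTranspose = A := by
    simp [hA, Matrix.conjTranspose_sum, Matrix.conjTranspose_smul, kronOp_herm]
  have e1 : (ev ψ A).re = ∑ i, t i ^ 2 := by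
    simp only [hA, ev, Matrix.mul_sum, Matrix.trace_sum, Matrix.mul_smul, Matrix.trace_smul,
      Complex.re_sum, smul_eq_mul, Complex.re_ofReal_mul]
    refine Finset.sum_congr rfl fun i _ => ?_
    rw [sq]; rfl
  have e2 : (ev ψ (A * A)).re = ∑ i, t i ^ 2 := by
    have : ev ψ (A * A) = ∑ i, ∑ j, ((t i * t j : ℝ) : ℂ) * ev ψ (kronOp (F i) * kronOp (F j)) := by
      rw [hA, Finset.sum_mul_sum]
      simp only [ev, Matrix.mul_sum, Matrix.trace_sum, Matrix.mul_smul, Matrix.trace_smul,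
        Matrix.smul_mul, smul_eq_mul, Complex.ofReal_mul]
      refine Finset.sum_congr rfl fun i _ => Finset.sum_congr rfl fun j _ => ?_
      ring
    rw [this]
    simp only [Complex.re_sum, Complex.re_ofReal_mul, hK]
    simp [sq]
  have e3 := ev_sq_nonneg ψ (A - 1)
  have e4 : (A - 1).conjTranspose * (A - 1) = A * A - A - A + 1 := by
    rw [Matrix.conjTranspose_sub, hAh, Matrix.conjTranspose_one]; noncomm_ring
  have e5 : ev ψ (A * A - A - A + 1) = ev ψ (A * A) - ev ψ A - ev ψ A + ev ψ 1 := by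
    simp [ev, Matrix.mul_add, Matrix.mul_sub]
  rw [e4, e5, ev_one ψ h] at e3
  simp only [Complex.add_re, Complex.sub_re, Complex.one_re, e1, e2] at e3
  linarith

theorem anti4 {R : Type*} [Ring R] (K : Fin 4 → R) (h01 : K 0 * K 1 = -(K 1 * K 0))
    (h02 : K 0 * K 2 = -(K 2 * K 0)) (h03 : K 0 * K 3 = -(K 3 * K 0))
    (h12 : K 1 * K 2 = -(K 2 * K 1)) (h13 : K 1 * K 3 = -(K 3 * K 1))
    (h23 : K 2 * K 3 = -(K 3 * K 2)) (i j : Fin 4) (hij : i ≠ j) : K i * K j = -(K j * K i) := by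
  fin_cases i <;> fin_cases j <;> simp_all

theorem star_bound (ψ : (ι → Fin 2) → ℂ) (h : UnitVec ψ) (k l m : ι) (hkl : k ≠ l) (hkm : k ≠ m)
    (hlm : l ≠ m) (a b : ℕ) (hab : pauli a * pauli b = -(pauli b * pauli a)) :
    corr (pureDensity ψ) k l a 1 ^ 2 + corr (pureDensity ψ) k l a 2 ^ 2 +
    corr (pureDensity ψ) k m b 1 ^ 2 + corr (pureDensity ψ) k m b 2 ^ 2 ≤ 1 := by
  have hba : pauli b * pauli a = -(pauli a * pauli b) := by rw [hab, neg_neg]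
  let g : ι → ℕ → ℕ → ι → ℕ := fun l i j q => if q = k then i else if q = l then j else 0
  have key := bessel ψ h ![g l a 1, g l a 2, g m b 1, g m b 2] ?_
  · simp only [Fin.sum_univ_four] at key
    exact key
  · have same : ∀ l, k ≠ l → ∀ a, kronOp (g l a 1) * kronOp (g l a 2)
        = -(kronOp (g l a 2) * kronOp (g l a 1)) := by
      intro l hl a
      refine kronOp_anti _ _ l ?_ ?_
      · simp [g, hl.symm, pauli_anti12]
      · intro q hq; left; simp [g, hq]
    have diff : ∀ c d, kronOp (g l a c) * kronOp (g m b d)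
        = -(kronOp (g m b d) * kronOp (g l a c)) := by
      intro c d
      refine kronOp_anti _ _ k ?_ ?_
      · simpa [g] using hab
      · intro q hq
        by_cases hql : q = l
        · right; right; subst hql; simp [g, hq, hlm]
        · right; left; simp [g, hq, hql]
    have s1 := same l hkl a
    have s2 := same m hkm b
    exact anti4 (fun i => kronOp (![g l a 1, g l a 2, g m b 1, g m b 2] i)) s1 (diff 1 1) (diff 1 2)
      (diff 2 1) (diff 2 2) s2

theorem Mkl_eq (ρ : Matrix (ι → Fin 2) (ι → Fin 2) ℂ) (k l : ι) :
    Mkl ρ k l = corr ρ k l 1 1 ^ 2 + corr ρ k l 1 2 ^ 2 + (corr ρ k l 2 1 ^ 2 + corr ρ k l 2 2 ^ 2) := by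
  have : Finset.Icc 1 2 = ({1, 2} : Finset ℕ) := rfl
  simp [Mkl, this]

theorem Mkl_nonneg (ρ : Matrix (ι → Fin 2) (ι → Fin 2) ℂ) (k l : ι) : 0 ≤ Mkl ρ k l := by
  rw [Mkl_eq]; positivity

theorem Mkl_pair (ψ : (ι → Fin 2) → ℂ) (h : UnitVec ψ) (k l m : ι) (hkl : k ≠ l) (hkm : k ≠ m)
    (hlm : l ≠ m) : Mkl (pureDensity ψ) k l + Mkl (pureDensity ψ) k m ≤ 2 := by
  have h1 := star_bound ψ h k l m hkl hkm hlm 1 2 pauli_anti12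
  have h2 := star_bound ψ h k l m hkl hkm hlm 2 1 pauli_anti21
  rw [Mkl_eq, Mkl_eq]; linarith

theorem corr_symm (ρ : Matrix (ι → Fin 2) (ι → Fin 2) ℂ) (k l : ι) (hkl : k ≠ l) (i j : ℕ) :
    corr ρ k l i j = corr ρ l k j i := by
  unfold corr
  congr 4
  ext q
  by_cases h1 : q = k
  · subst h1; simp [hkl]
  · simp [h1]

theorem Mkl_symm (ρ : Matrix (ι → Fin 2) (ι → Fin 2) ℂ) (k l : ι) (hkl : k ≠ l) :
    Mkl ρ k l = Mkl ρ l k := by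
  rw [Mkl_eq, Mkl_eq, corr_symm ρ k l hkl, corr_symm ρ k l hkl, corr_symm ρ k l hkl,
    corr_symm ρ k l hkl]
  ring

end general

/-- Factorization of expectation values over a sum of index types. -/
theorem ev_prod {ι α β : Type*} [Fintype ι] [DecidableEq ι] [Fintype α] [DecidableEq α]
    [Fintype β] [DecidableEq β] (s : α ⊕ β ≃ ι) (ψ : (ι → Fin 2) → ℂ) (φ : (α → Fin 2) → ℂ)
    (χ : (β → Fin 2) → ℂ)
    (hp : ∀ x, ψ x = φ (fun a => x (s (Sum.inl a))) * χ (fun b => x (s (Sum.inr b))))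
    (f : ι → ℕ) :
    ev ψ (kronOp f) = ev φ (kronOp (fun a => f (s (Sum.inl a)))) *
      ev χ (kronOp (fun b => f (s (Sum.inr b)))) := by
  let e : (ι → Fin 2) ≃ (α → Fin 2) × (β → Fin 2) :=
    (s.symm.arrowCongr (Equiv.refl _)).trans (Equiv.sumArrowEquivProdArrow α β (Fin 2))
  have he1 : ∀ x, (e x).1 = fun a => x (s (Sum.inl a)) := fun x => rfl
  have he2 : ∀ x, (e x).2 = fun a => x (s (Sum.inr a)) := fun x => rfl
  have hK : ∀ x y, kronOp f y x = kronOp (fun a => f (s (Sum.inl a))) (e y).1 (e x).1 *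
      kronOp (fun b => f (s (Sum.inr b))) (e y).2 (e x).2 := by
    intro x y
    simp only [kronOp, Matrix.of_apply, he1, he2]
    rw [← s.prod_comp, Fintype.prod_sum_type]
  have hsum : ∀ G : (α → Fin 2) × (β → Fin 2) → (α → Fin 2) × (β → Fin 2) → ℂ,
      ∑ x, ∑ y, G (e x) (e y) = ∑ x, ∑ y, G x y := by
    intro G
    rw [← e.sum_comp]
    exact Finset.sum_congr rfl fun x _ => e.sum_comp (fun y => G (e x) y)
  rw [ev_eq, ev_eq, ev_eq]
  have := hsum (fun x y => (φ x.1 * χ x.2) * (starRingEnd ℂ) (φ y.1 * χ y.2) *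
    (kronOp (fun a => f (s (Sum.inl a))) y.1 x.1 * kronOp (fun b => f (s (Sum.inr b))) y.2 x.2))
  simp only [hp, hK]
  refine Eq.trans this ?_
  simp only [Fintype.sum_prod_type, Finset.sum_mul_sum, map_mul]
  refine Finset.sum_congr rfl fun x _ => Finset.sum_congr rfl fun y _ =>
    Finset.sum_congr rfl fun z _ => Finset.sum_congr rfl fun w _ => ?_
  ring

theorem corr_cross {ι α β : Type*} [Fintype ι] [DecidableEq ι] [Fintype α] [DecidableEq α]
    [Fintype β] [DecidableEq β] (s : α ⊕ β ≃ ι) (ψ : (ι → Fin 2) → ℂ) (φ : (α → Fin 2) → ℂ)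
    (χ : (β → Fin 2) → ℂ) (hχ : UnitVec χ)
    (hp : ∀ x, ψ x = φ (fun a => x (s (Sum.inl a))) * χ (fun b => x (s (Sum.inr b))))
    (a : α) (b : β) (i j : ℕ) (hb : bloch (pureDensity ψ) (s (Sum.inl a)) i = 0) :
    corr (pureDensity ψ) (s (Sum.inl a)) (s (Sum.inr b)) i j = 0 := by
  change (ev ψ (kronOp _)).re = 0 at hb
  change (ev ψ (kronOp _)).re = 0
  rw [ev_prod s ψ φ χ hp] at hb ⊢
  simp only [EmbeddingLike.apply_eq_iff_eq, Sum.inl.injEq, reduceCtorEq, if_false, kronOp_zero,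
    ev_one χ hχ, mul_one] at hb ⊢
  rw [Complex.mul_re, hb, ev_real]
  simp

theorem sum_le_card {ι : Type*} [DecidableEq ι] (s : Finset ι) (x : ι → ℝ)
    (h : ∀ a ∈ s, ∀ b ∈ s, a ≠ b → x a + x b ≤ 2) (hs : 2 ≤ s.card) :
    ∑ a ∈ s, x a ≤ s.card := by
  by_cases hx : ∀ a ∈ s, x a ≤ 1
  · calc _ ≤ ∑ a ∈ s, (1 : ℝ) := Finset.sum_le_sum hx
      _ = _ := by simp
  · push Not at hx
    obtain ⟨a, ha, hxa⟩ := hx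
    obtain ⟨b, hb, hba⟩ := Finset.exists_mem_ne (s := s) (by omega) a
    rw [← Finset.add_sum_erase _ _ ha,
      ← Finset.add_sum_erase _ _ (Finset.mem_erase.mpr ⟨hba, hb⟩)]
    have h1 : ∑ c ∈ (s.erase a).erase b, x c ≤ ∑ c ∈ (s.erase a).erase b, (1 : ℝ) := by
      refine Finset.sum_le_sum fun c hc => ?_
      have := h a ha c (Finset.mem_of_mem_erase (Finset.mem_of_mem_erase hc))
        (Finset.ne_of_mem_erase (Finset.mem_of_mem_erase hc)).symm
      linarith
    have h2 := h a ha b hb hba.symm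
    rw [Finset.sum_const, nsmul_eq_mul, mul_one, Finset.card_erase_of_mem
      (Finset.mem_erase.mpr ⟨hba, hb⟩), Finset.card_erase_of_mem ha] at h1
    have : ((s.card - 1 - 1 : ℕ) : ℝ) = s.card - 2 := by
      rw [Nat.sub_sub, Nat.cast_sub hs]; norm_num
    linarith

/-- Row-sum bound for a block of size `a`. -/
def rowB (a : ℕ) : ℕ := if a = 2 then 2 else a - 1

theorem block_sum {ι : Type*} [DecidableEq ι] (g : ι → ι → ℝ)
    (hpair : ∀ k l m, k ≠ l → k ≠ m → l ≠ m → g k l + g k m ≤ 2)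
    (hle : ∀ k l, k ≠ l → g k l ≤ 2) (A : Finset ι) :
    ∑ k ∈ A, ∑ l ∈ A.erase k, g k l ≤ ((A.card * rowB A.card : ℕ) : ℝ) := by
  have : ∀ k ∈ A, ∑ l ∈ A.erase k, g k l ≤ (rowB A.card : ℝ) := by
    intro k hk
    have hc := Finset.card_erase_of_mem hk
    by_cases h2 : A.card = 2
    · rw [h2] at hc
      obtain ⟨l, hl⟩ := Finset.card_eq_one.mp hc
      have hlk : l ∈ A.erase k := by rw [hl]; simp
      rw [hl, Finset.sum_singleton, h2]
      simpa [rowB] using hle k l (Finset.ne_of_mem_erase hlk).symm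
    · rw [rowB, if_neg h2, ← hc]
      by_cases h3 : 2 ≤ (A.erase k).card
      · exact sum_le_card _ _ (fun l hl m hm hlm => hpair k l m (Finset.ne_of_mem_erase hl).symm
          (Finset.ne_of_mem_erase hm).symm hlm) h3
      · have : (A.erase k).card = 0 := by
          have := Finset.card_pos.mpr ⟨k, hk⟩
          omega
        rw [Finset.card_eq_zero.mp this]; simp
  calc _ ≤ ∑ k ∈ A, (rowB A.card : ℝ) := Finset.sum_le_sum this
    _ = _ := by simp

theorem rowB_bound (a b n : ℕ) (hn : 5 ≤ n) (ha : 0 < a) (hb : 0 < b) (hab : a + b = n) :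
    a * rowB a + b * rowB b ≤ 2 * (n - 1).choose 2 := by
  have hc : 2 * (n - 1).choose 2 = (n - 1) * (n - 2) := by
    rw [Nat.choose_two_right, Nat.sub_sub, mul_comm]
    exact Nat.div_mul_cancel (Nat.even_mul_pred_self (n - 1)).two_dvd
  rw [hc]
  obtain ⟨a, rfl⟩ : ∃ c, a = c + 1 := ⟨a - 1, by omega⟩
  obtain ⟨b, rfl⟩ : ∃ c, b = c + 1 := ⟨b - 1, by omega⟩
  subst hab
  have e1 : a + 1 + (b + 1) - 1 = a + b + 1 := by omega
  have e2 : a + 1 + (b + 1) - 2 = a + b := by omega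
  rw [e1, e2]
  unfold rowB
  split_ifs with h1 h2 h2
  · omega
  · obtain rfl : a = 1 := by omega
    simp only [Nat.add_sub_cancel]
    nlinarith
  · obtain rfl : b = 1 := by omega
    simp only [Nat.add_sub_cancel]
    nlinarith
  · simp only [Nat.add_sub_cancel]
    nlinarith [Nat.zero_le (a * b)]

theorem Mtot_double {n : ℕ} (ρ : Matrix (Fin n → Fin 2) (Fin n → Fin 2) ℂ) :
    2 * Mtot ρ = ∑ k, ∑ l ∈ Finset.univ.erase k, Mkl ρ k l := by
  have h1 : Mtot ρ = ∑ k, ∑ l, if k < l then Mkl ρ k l else 0 := by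
    rw [Mtot, Finset.sum_filter, Fintype.sum_prod_type]
  have h2 : Mtot ρ = ∑ k, ∑ l, if l < k then Mkl ρ k l else 0 := by
    rw [h1, Finset.sum_comm]
    refine Finset.sum_congr rfl fun k _ => Finset.sum_congr rfl fun l _ => ?_
    split_ifs with h
    · exact Mkl_symm ρ l k h.ne
    · rfl
  rw [two_mul]
  nth_rewrite 1 [h1]
  rw [h2, ← Finset.sum_add_distrib]
  refine Finset.sum_congr rfl fun k _ => ?_
  rw [← Finset.sum_add_distrib, ← Finset.filter_ne, Finset.sum_filter]
  refine Finset.sum_congr rfl fun l _ => ?_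
  rcases lt_trichotomy k l with h | h | h
  · simp [h, h.ne, h.not_gt]
  · simp [h]
  · simp [h, h.ne', h.not_gt]

/-- Proposition 5, main case: for `n ≥ 5`, if a preferred-basis
pure state satisfies `M(ρ_ψ) > C(n-1,2)`, then `ψ` is genuinely `n`-partite
entangled: it is a product over no bipartition. -/
theorem genuinely_entangled_of_Mtot_gt (n : ℕ) (hn : 5 ≤ n)
    (ψ : (Fin n → Fin 2) → ℂ) (hψ : UnitVec ψ)
    (hpb : PreferredBasis (pureDensity ψ))
    (hM : Mtot (pureDensity ψ) > ((n - 1).choose 2 : ℝ)) :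
    ¬ ∃ P : Fin 2 → Finset (Fin n), IsPartition P ∧ IsProductOver ψ P := by
  rintro ⟨P, ⟨hne, hdis, hcov⟩, φ, hφ, hprod⟩
  have hd : Disjoint (P 0) (P 1) := hdis 0 1 (by decide)
  have hbij : Function.Bijective (Sum.elim (fun a : ↥(P 0) => a.val) (fun b : ↥(P 1) => b.val)) := by
    constructor
    · rintro (⟨a, ha⟩ | ⟨a, ha⟩) (⟨b, hb⟩ | ⟨b, hb⟩) h <;>
        simp only [Sum.elim_inl, Sum.elim_inr] at h <;> subst h
      · rfl
      · exact absurd hb (Finset.disjoint_left.mp hd ha)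
      · exact absurd ha (Finset.disjoint_left.mp hd hb)
      · rfl
    · intro q
      obtain ⟨m, hm⟩ := hcov q
      fin_cases m
      · exact ⟨Sum.inl ⟨q, hm⟩, rfl⟩
      · exact ⟨Sum.inr ⟨q, hm⟩, rfl⟩
  let s : ↥(P 0) ⊕ ↥(P 1) ≃ Fin n := Equiv.ofBijective _ hbij
  have hcross : ∀ k ∈ P 0, ∀ l ∈ P 1, Mkl (pureDensity ψ) k l = 0 := by
    intro k hk l hl
    have hc : ∀ i j, bloch (pureDensity ψ) k i = 0 → corr (pureDensity ψ) k l i j = 0 := by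
      intro i j hb
      refine corr_cross s ψ (φ 0) (φ 1) (hφ 1) ?_ ⟨k, hk⟩ ⟨l, hl⟩ i j hb
      intro x
      rw [hprod x, Fin.prod_univ_two]
      rfl
    rw [Mkl_eq, hc 1 1 (hpb k).1, hc 1 2 (hpb k).1, hc 2 1 (hpb k).2, hc 2 2 (hpb k).2]
    norm_num
  have hpair := Mkl_pair ψ hψ
  have hle : ∀ k l, k ≠ l → Mkl (pureDensity ψ) k l ≤ 2 := by
    intro k l hkl
    have hcard : ({k, l} : Finset (Fin n)).card < (Finset.univ : Finset (Fin n)).card := by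
      have := Finset.card_le_two (a := k) (b := l)
      rw [Finset.card_univ, Fintype.card_fin]; omega
    obtain ⟨m, -, hm⟩ := Finset.exists_mem_notMem_of_card_lt_card hcard
    simp only [Finset.mem_insert, Finset.mem_singleton, not_or] at hm
    have := hpair k l m hkl (Ne.symm hm.1) (Ne.symm hm.2)
    have := Mkl_nonneg (pureDensity ψ) k m
    linarith
  have hun : (Finset.univ : Finset (Fin n)) = P 0 ∪ P 1 := by
    ext q
    obtain ⟨m, hm⟩ := hcov q
    fin_cases m <;> simp at hm <;> simp [hm]
  have hcardn : (P 0).card + (P 1).card = n := by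
    rw [← Finset.card_union_of_disjoint hd, ← hun, Finset.card_univ, Fintype.card_fin]
  have row0 : ∀ k ∈ P 0, ∑ l ∈ Finset.univ.erase k, Mkl (pureDensity ψ) k l =
      ∑ l ∈ (P 0).erase k, Mkl (pureDensity ψ) k l := by
    intro k hk
    symm
    refine Finset.sum_subset (Finset.erase_subset_erase _ (Finset.subset_univ _)) ?_
    intro l hl hl'
    have hlk := Finset.ne_of_mem_erase hl
    have : l ∈ P 0 ∪ P 1 := hun ▸ Finset.mem_univ l
    rcases Finset.mem_union.mp this with h | h
    · exact absurd (Finset.mem_erase.mpr ⟨hlk, h⟩) hl'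
    · exact hcross k hk l h
  have row1 : ∀ k ∈ P 1, ∑ l ∈ Finset.univ.erase k, Mkl (pureDensity ψ) k l =
      ∑ l ∈ (P 1).erase k, Mkl (pureDensity ψ) k l := by
    intro k hk
    symm
    refine Finset.sum_subset (Finset.erase_subset_erase _ (Finset.subset_univ _)) ?_
    intro l hl hl'
    have hlk := Finset.ne_of_mem_erase hl
    have : l ∈ P 0 ∪ P 1 := hun ▸ Finset.mem_univ l
    rcases Finset.mem_union.mp this with h | h
    · rw [Mkl_symm _ _ _ hlk.symm]; exact hcross l h k hk
    · exact absurd (Finset.mem_erase.mpr ⟨hlk, h⟩) hl'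
  have htot := Mtot_double (pureDensity ψ)
  have hsplit : ∑ k, ∑ l ∈ Finset.univ.erase k, Mkl (pureDensity ψ) k l =
      ∑ k ∈ P 0, ∑ l ∈ (P 0).erase k, Mkl (pureDensity ψ) k l +
      ∑ k ∈ P 1, ∑ l ∈ (P 1).erase k, Mkl (pureDensity ψ) k l := by
    rw [← Finset.sum_congr rfl row0, ← Finset.sum_congr rfl row1, ← Finset.sum_union hd, ← hun]
  have b0 := block_sum _ hpair hle (P 0)
  have b1 := block_sum _ hpair hle (P 1)
  have hfin := rowB_bound _ _ n hn (Finset.card_pos.mpr (hne 0)) (Finset.card_pos.mpr (hne 1)) hcardn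
  have hfin' : (((P 0).card * rowB (P 0).card : ℕ) : ℝ) + (((P 1).card * rowB (P 1).card : ℕ) : ℝ)
      ≤ 2 * ((n - 1).choose 2 : ℝ) := by exact_mod_cast hfin
  linarith
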